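/- arXiv:2404.06271 — 4 statements merged into one kernel-verified Lean document; each statement's English description precedes it below -/
import Mathlib

section
/- Let (F,ν) be a discrete valuation field and n≥1 an integer. There is a unique ℚ-linear map ∂_ν: Λ^n(Fˣ) → Λ^{n−1}(k_νˣ) such that: (1) for n=1, ∂_ν(x) = ν(x) ∈ ℚ = Λ^0(k_νˣ) for all x∈Fˣ; and (2) for every x∈Fˣ and all units u₂,…,u_n of O_ν, ∂_ν(x∧u₂∧…∧u_n) = ν(x)·(ū₂∧…∧ū_n). This map is called the tame symbol. -/
/-!
Fix a uniformizer `p`.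

*Existence.* The valuation extends to a linear functional `ν` on `Fˣ ⊗ ℚ`, and
`x ↦ residue of x * p ^ (-ν(x))` is a homomorphism `Fˣ → Kˣ` extending the residue map on units
(`DVF.spec`). Contraction with `ν` is an antiderivation of the exterior algebra of `Fˣ ⊗ ℚ` which
lowers the degree by one (`contractLeft_ιMulti_mem`) and kills wedges of units
(`contractLeft_ιMulti_eq_zero`); it therefore sends `x ∧ u₂ ∧ … ∧ u_n` to
`ν(x) • (u₂ ∧ … ∧ u_n)` when the `uᵢ` are units. Following it by the algebra map induced by the
specialization gives the tame symbol.

*Uniqueness.* Since `x = p ^ ν(x) * (unit)`, the space `Fˣ ⊗ ℚ` is spanned by `p` and the units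
(`span_generators`), so it has a basis consisting of such elements. An alternating map is determined
by its values on injective families of basis vectors; these contain `p` at most once, and a
transposition moves `p` to the first position, where the value is prescribed.
-/


open scoped TensorProduct

set_option maxHeartbeats 1000000
set_option synthInstance.maxHeartbeats 1000000

noncomputable section

/-! ## The ℚ-vector space `G ⊗ ℚ` attached to a multiplicative abelian group `G`,
and its exterior powers `Λ^n(G)`. -/

/-- `G ⊗_ℤ ℚ` for a multiplicative abelian group `G`. -/
abbrev QW (G : Type*) [CommGroup G] : Type _ := ℚ ⊗[ℤ] (Additive G)

/-- The image of `g : G` in `G ⊗ ℚ`. -/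
def toQ {G : Type*} [CommGroup G] (g : G) : QW G :=
  (1 : ℚ) ⊗ₜ[ℤ] (Additive.ofMul g)

open Classical in
/-- The image of a nonzero field element in `Eˣ ⊗ ℚ` (zero is sent to zero). -/
def toQF {E : Type*} [Field E] (x : E) : QW Eˣ :=
  if h : x = 0 then 0 else toQ (Units.mk0 x h)

/-- `Λ^n(G)`: the `n`-th exterior power over `ℚ` of `G ⊗ ℚ`. -/
def Lambda (n : ℕ) (G : Type*) [CommGroup G] : Type _ := ⋀[ℚ]^n (QW G)

instance (n : ℕ) (G : Type*) [CommGroup G] : AddCommGroup (Lambda n G) :=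
  inferInstanceAs (AddCommGroup (⋀[ℚ]^n (QW G)))

instance (n : ℕ) (G : Type*) [CommGroup G] : Module ℚ (Lambda n G) :=
  inferInstanceAs (Module ℚ (⋀[ℚ]^n (QW G)))

/-- The underlying element of the ambient exterior algebra of `Λ^n(G)`. -/
def Lambda.amb {n : ℕ} {G : Type*} [CommGroup G] (x : Lambda n G) :
    ExteriorAlgebra ℚ (QW G) :=
  Subtype.val x

/-- Wedge `x₁ ∧ … ∧ x_n` of field elements, in the ambient exterior algebra of `Eˣ ⊗ ℚ`. -/
def fw {E : Type*} [Field E] {n : ℕ} (v : Fin n → E) : ExteriorAlgebra ℚ (QW Eˣ) :=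
  ExteriorAlgebra.ιMulti ℚ n fun i => toQF (v i)

/-- Wedge `x₁ ∧ … ∧ x_n` of field elements, as an element of `Λ^n(Eˣ)`. -/
def wedge {E : Type*} [Field E] {n : ℕ} (v : Fin n → E) : Lambda n Eˣ :=
  ⟨fw v, ExteriorAlgebra.ιMulti_range ℚ n (Set.mem_range_self _)⟩

/-- The map `ExteriorAlgebra(G ⊗ ℚ) → ExteriorAlgebra(G' ⊗ ℚ)` induced by a homomorphism
`f : G →* G'`; it restricts to the functorial map `Λ^n(G) → Λ^n(G')` in each degree. -/
def lamMap {G G' : Type*} [CommGroup G] [CommGroup G'] (f : G →* G') :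
    ExteriorAlgebra ℚ (QW G) →ₐ[ℚ] ExteriorAlgebra ℚ (QW G') :=
  ExteriorAlgebra.map (LinearMap.baseChange ℚ (MonoidHom.toAdditive f).toIntLinearMap)

/-! ## The group `B₂(E)` and the five-term relations. -/

/-- The cross-ratio of four points of `P¹(E) = E ∪ {∞}` (`∞ = none`), with value in `E`:
for pairwise distinct arguments at most one argument is `∞`, and the value is the usual
cross-ratio `((z₁−z₃)(z₂−z₄))/((z₁−z₄)(z₂−z₃))`, extended to `∞` in the usual way. -/
def crP {E : Type*} [Field E] : Option E → Option E → Option E → Option E → E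
  | some z₁, some z₂, some z₃, some z₄ => ((z₁ - z₃) * (z₂ - z₄)) / ((z₁ - z₄) * (z₂ - z₃))
  | none, some z₂, some z₃, some z₄ => (z₂ - z₄) / (z₂ - z₃)
  | some z₁, none, some z₃, some z₄ => (z₁ - z₃) / (z₁ - z₄)
  | some z₁, some z₂, none, some z₄ => (z₂ - z₄) / (z₁ - z₄)
  | some z₁, some z₂, some z₃, none => (z₁ - z₃) / (z₂ - z₃)
  | _, _, _, _ => 0

/-- The subspace of relations defining `B₂(E)`: spanned by `{0}₂`, `{1}₂`, `{∞}₂` and the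
five-term elements `Σᵢ (−1)ⁱ {cr(z₁,…,ẑᵢ,…,z₅)}₂` for pairwise distinct `z₁,…,z₅ ∈ P¹(E)`. -/
def fiveTermRel (E : Type*) [Field E] : Submodule ℚ (Option E →₀ ℚ) :=
  Submodule.span ℚ
    ({Finsupp.single (some 0) 1, Finsupp.single (some 1) 1, Finsupp.single none 1} ∪
      {x | ∃ z : Fin 5 → Option E, (∀ i j, i ≠ j → z i ≠ z j) ∧
        x = ∑ i : Fin 5, (-1 : ℚ) ^ (i : ℕ) •
          Finsupp.single (some (crP (z (i.succAbove 0)) (z (i.succAbove 1))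
            (z (i.succAbove 2)) (z (i.succAbove 3)))) 1})

/-- `B₂(E)`: the ℚ-vector space with basis `{x}₂`, `x ∈ P¹(E)`, modulo `{0}₂`, `{1}₂`,
`{∞}₂` and the five-term relations. -/
def B2 (E : Type*) [Field E] : Type _ := (Option E →₀ ℚ) ⧸ fiveTermRel E

instance (E : Type*) [Field E] : AddCommGroup (B2 E) :=
  inferInstanceAs (AddCommGroup ((Option E →₀ ℚ) ⧸ fiveTermRel E))

instance (E : Type*) [Field E] : Module ℚ (B2 E) :=
  inferInstanceAs (Module ℚ ((Option E →₀ ℚ) ⧸ fiveTermRel E))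

/-- The class `{x}₂ ∈ B₂(E)` of `x ∈ E`. -/
def B2sym {E : Type*} [Field E] (x : E) : B2 E :=
  Submodule.Quotient.mk (Finsupp.single (some x) 1)

/-! ## Discrete valuation fields, with a chosen realization `K` of the residue field. -/

/-- A discrete valuation `ν` on a field `F`, together with a realization of its residue
field as a field `K`: `v` is a surjective homomorphism `Fˣ → ℤ` satisfying the ultrametric
inequality, and `res : F → K` realizes `K` as the residue field `O_ν/m_ν` (by convention
`res` is normalized to vanish outside of `O_ν`, so that this data is rigid). -/
structure DVF (F K : Type*) [Field F] [Field K] where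
  v : Fˣ → ℤ
  v_mul : ∀ x y : Fˣ, v (x * y) = v x + v y
  v_surj : Function.Surjective v
  v_min : ∀ x y z : Fˣ, (z : F) = (x : F) + (y : F) → min (v x) (v y) ≤ v z
  res : F → K
  res_zero : res 0 = 0
  res_one : res 1 = 1
  res_add : ∀ x y : Fˣ, 0 ≤ v x → 0 ≤ v y → res ((x : F) + (y : F)) = res (x : F) + res (y : F)
  res_mul : ∀ x y : Fˣ, 0 ≤ v x → 0 ≤ v y → res ((x : F) * (y : F)) = res (x : F) * res (y : F)
  res_vanish : ∀ x : Fˣ, 0 < v x → res (x : F) = 0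
  res_unit : ∀ x : Fˣ, v x = 0 → res (x : F) ≠ 0
  res_junk : ∀ x : Fˣ, v x < 0 → res (x : F) = 0
  res_surj : ∀ c : K, c ≠ 0 → ∃ x : Fˣ, v x = 0 ∧ res (x : F) = c

/-- `D` is *the* tame symbol `∂_ν : Λ^{n+1}(Fˣ) → Λ^n(Kˣ)` of the discrete valuation `w`:
it is ℚ-linear and `∂_ν(x ∧ u₂ ∧ … ∧ u_{n+1}) = ν(x)·(ū₂ ∧ … ∧ ū_{n+1})` whenever
`u₂, …, u_{n+1}` are units (for `n = 0` this reads `∂_ν(x) = ν(x) ∈ ℚ = Λ^0(Kˣ)`). -/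
def IsTameSymbol {F K : Type*} [Field F] [Field K] (w : DVF F K) (n : ℕ)
    (D : Lambda (n+1) Fˣ →ₗ[ℚ] Lambda n Kˣ) : Prop :=
  ∀ (x : Fˣ) (u : Fin n → Fˣ), (∀ i, w.v (u i) = 0) →
    D (wedge (Fin.cons (x : F) (fun i => (u i : F)))) =
      (w.v x : ℚ) • wedge (fun i => w.res (u i : F))

/-- `DB` is *the* tame symbol `∂_ν^B : B₂(F)⊗Λ^{n+1}(Fˣ) → B₂(K)⊗Λ^n(Kˣ)` on the
polylogarithmic side, relative to the tame symbol `D = ∂_ν : Λ^{n+1}(Fˣ) → Λ^n(Kˣ)`: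
`∂_ν^B({a}₂⊗b) = 0` when `ν(a) ≠ 0`, and `∂_ν^B({u}₂⊗b) = −{ū}₂⊗∂_ν(b)` for `u` a unit. -/
def IsTameSymbolB {F K : Type*} [Field F] [Field K] (w : DVF F K) (n : ℕ)
    (D : Lambda (n+1) Fˣ →ₗ[ℚ] Lambda n Kˣ)
    (DB : (B2 F ⊗[ℚ] Lambda (n+1) Fˣ) →ₗ[ℚ] (B2 K ⊗[ℚ] Lambda n Kˣ)) : Prop :=
  (∀ a : Fˣ, (a : F) ≠ 1 → w.v a ≠ 0 → ∀ b : Lambda (n+1) Fˣ,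
      DB (B2sym (a : F) ⊗ₜ b) = 0) ∧
  (∀ u : Fˣ, w.v u = 0 → ∀ b : Lambda (n+1) Fˣ,
      DB (B2sym (u : F) ⊗ₜ b) = - (B2sym (w.res (u : F)) ⊗ₜ D b))

/-- `δ` is *the* differential `δ_{n+2} : B₂(E)⊗Λ^n(Eˣ) → Λ^{n+2}(Eˣ)` of the
polylogarithmic complex: `δ({x}₂ ⊗ w) = x ∧ (1−x) ∧ w` for `x ∈ E∖{0,1}`. -/
def IsDelta (E : Type*) [Field E] (n : ℕ)
    (δ : (B2 E ⊗[ℚ] Lambda n Eˣ) →ₗ[ℚ] Lambda (n+2) Eˣ) : Prop :=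
  ∀ x : E, x ≠ 0 → x ≠ 1 → ∀ b : Lambda n Eˣ,
    (δ (B2sym x ⊗ₜ b)).amb = fw ![x, 1 - x] * b.amb

/-- The subspace `D_m ⊆ B₂(K)⊗Λ^{m−2}(Kˣ)` (here `n = m−2`): the ℚ-span of the elements
`{x}₂ ⊗ (x ∧ w)` with `x ∈ K∖{0,1}` and `w ∈ Λ^{m−3}(Kˣ)`; it is `0` when `m = 2`. -/
def Dspan (K : Type*) [Field K] : (n : ℕ) → Submodule ℚ (B2 K ⊗[ℚ] Lambda n Kˣ)
  | 0 => ⊥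
  | (n+1) => Submodule.span ℚ
      {z | ∃ x : K, x ≠ 0 ∧ x ≠ 1 ∧ ∃ y : Lambda (n+1) Kˣ,
        (∃ w ∈ ⋀[ℚ]^n (QW Kˣ), y.amb = fw ![x] * w) ∧ z = B2sym x ⊗ₜ y}

/-- A discrete valuation (with residue field realized as `k`) on a field `L` over `K`,
trivial on `K` and inducing on `K ⊆ O_ν` the canonical copy of `K` inside `k`. -/
structure KDVF (K L k : Type*) [Field K] [Field L] [Field k] [Algebra K L] [Algebra K k]
    extends DVF L k where
  v_triv : ∀ (c : K) (u : Lˣ), (u : L) = algebraMap K L c → v u = 0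
  res_alg : ∀ c : K, res (algebraMap K L c) = algebraMap K k c

/-- `F` is a one-dimensional field over `K`: finitely generated of transcendence degree 1. -/
def IsOneDim (K F : Type*) [Field K] [Field F] [Algebra K F] : Prop :=
  (∃ s : Finset F, IntermediateField.adjoin K (s : Set F) = ⊤) ∧
  ∃ t : F, Transcendental K t ∧
    Algebra.IsAlgebraic (IntermediateField.adjoin K ({t} : Set F)) F

/-- `L` is a two-dimensional field over `K`: finitely generated of transcendence degree 2. -/
def IsTwoDim (K L : Type*) [Field K] [Field L] [Algebra K L] : Prop :=
  (∃ s : Finset L, IntermediateField.adjoin K (s : Set L) = ⊤) ∧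
  ∃ t : Fin 2 → L, AlgebraicIndependent K t ∧
    Algebra.IsAlgebraic (IntermediateField.adjoin K (Set.range t)) L

universe u

/-- The data of a divisorial valuation on a field `L` over `K`: a residue field `k` which is
one-dimensional over `K`, together with a discrete valuation of `L` over `K` with residue
field `k`. -/
structure DValData (K L : Type u) [Field K] [Field L] [Algebra K L] : Type (u+1) where
  k : Type u
  [fieldk : Field k]
  [algk : Algebra K k]
  w : KDVF K L k
  onedim : IsOneDim K k

attribute [instance] DValData.fieldk DValData.algk

/-- `vf : Lˣ → ℤ` is a divisorial valuation of `L` over `K` (an element of `dval(L)`):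
a discrete valuation trivial on `K` whose residue field is one-dimensional over `K`. -/
def IsDVal (K L : Type u) [Field K] [Field L] [Algebra K L] (vf : Lˣ → ℤ) : Prop :=
  ∃ d : DValData K L, d.w.v = vf

/-- The set `dval(L)` of divisorial valuations of `L` over `K`, as a type. -/
def DVal (K L : Type u) [Field K] [Field L] [Algebra K L] : Type u :=
  {vf : Lˣ → ℤ // IsDVal K L vf}

/-- `h` is a lifted reciprocity map (in weight `m = n+2 ≥ 2`) on the one-dimensional field
`F` over `K`.  The set `val(F)` of discrete valuations of `F` trivial on `K` (whose residue
fields are the finite extension `K` of `K`) is the type `KDVF K F K`; the maps `∂_ν`, `∂_ν^B`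
and `δ` are specified through their characteristic predicates, as they are unique. -/
def IsLiftedRec (K F : Type*) [Field K] [Field F] [Algebra K F] (n : ℕ)
    (h : Lambda (n+3) Fˣ →ₗ[ℚ] ((B2 K ⊗[ℚ] Lambda n Kˣ) ⧸ Dspan K n)) : Prop :=
  -- (i)  h(δ_{m+1}(α)) = Tot_F(α) mod D_m
  (∀ (δF : (B2 F ⊗[ℚ] Lambda (n+1) Fˣ) →ₗ[ℚ] Lambda (n+3) Fˣ), IsDelta F (n+1) δF →
    ∀ (D : (ν : KDVF K F K) → (Lambda (n+1) Fˣ →ₗ[ℚ] Lambda n Kˣ)),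
      (∀ ν, IsTameSymbol ν.toDVF n (D ν)) →
    ∀ (DB : (ν : KDVF K F K) →
        ((B2 F ⊗[ℚ] Lambda (n+1) Fˣ) →ₗ[ℚ] (B2 K ⊗[ℚ] Lambda n Kˣ))),
      (∀ ν, IsTameSymbolB ν.toDVF n (D ν) (DB ν)) →
    ∀ α : B2 F ⊗[ℚ] Lambda (n+1) Fˣ,
      h (δF α) = Submodule.Quotient.mk (∑ᶠ ν : KDVF K F K, DB ν α)) ∧
  -- (ii)  δ_m(h(b)) = −Tot_F(b)
  (∀ (δK : (B2 K ⊗[ℚ] Lambda n Kˣ) →ₗ[ℚ] Lambda (n+2) Kˣ), IsDelta K n δK →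
    ∀ (D : (ν : KDVF K F K) → (Lambda (n+3) Fˣ →ₗ[ℚ] Lambda (n+2) Kˣ)),
      (∀ ν, IsTameSymbol ν.toDVF (n+2) (D ν)) →
    ∀ b : Lambda (n+3) Fˣ, ∀ y : B2 K ⊗[ℚ] Lambda n Kˣ,
      Submodule.Quotient.mk y = h b → δK y = - ∑ᶠ ν : KDVF K F K, D ν b) ∧
  -- (iii)  h(f₁ ∧ f₂ ∧ c₃ ∧ … ∧ c_{m+1}) = 0
  (∀ (f₁ f₂ : Fˣ) (c : Fin (n+1) → Kˣ),
    h (wedge (Fin.cons (f₁ : F) (Fin.cons (f₂ : F)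
      (fun i => algebraMap K F (c i : K))))) = 0)

end

open ExteriorAlgebra CliffordAlgebra

noncomputable section TameSymbol

/-! ### Valuation and specialization on `Fˣ ⊗ ℚ` -/

theorem DVF.v_one {F K : Type*} [Field F] [Field K] (w : DVF F K) : w.v 1 = 0 := by
  have := w.v_mul 1 1
  simp only [mul_one] at this
  lia

/-- The valuation as a homomorphism `Fˣ → ℤ`, written multiplicatively. -/
def DVF.vHom {F K : Type*} [Field F] [Field K] (w : DVF F K) : Fˣ →* Multiplicative ℤ where
  toFun x := Multiplicative.ofAdd (w.v x)
  map_one' := by simp [w.v_one]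
  map_mul' x y := by simp [w.v_mul]

theorem DVF.v_zpow {F K : Type*} [Field F] [Field K] (w : DVF F K) (x : Fˣ) (m : ℤ) :
    w.v (x ^ m) = m * w.v x := by
  have h := map_zpow w.vHom x m
  have h2 := congrArg Multiplicative.toAdd h
  simpa [DVF.vHom] using h2

theorem DVF.v_mul_zpow_neg {F K : Type*} [Field F] [Field K] (w : DVF F K) {p : Fˣ}
    (hp : w.v p = 1) (x : Fˣ) : w.v (x * p ^ (-w.v x)) = 0 := by
  rw [w.v_mul, w.v_zpow, hp]; ring

/-- The specialization `Fˣ → Kˣ` attached to a uniformizer `p`: the residue class of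
`x * p ^ (-ν(x))`. -/
def DVF.spec {F K : Type*} [Field F] [Field K] (w : DVF F K) (p : Fˣ) (hp : w.v p = 1) :
    Fˣ →* Kˣ where
  toFun x := Units.mk0 (w.res ((x * p ^ (-w.v x) : Fˣ) : F))
    (w.res_unit _ (w.v_mul_zpow_neg hp x))
  map_one' := by
    ext
    simp [w.v_one, w.res_one]
  map_mul' x y := by
    ext
    simp only [Units.val_mk0, Units.val_mul (α := K)]
    rw [← w.res_mul _ _ (w.v_mul_zpow_neg hp x).ge (w.v_mul_zpow_neg hp y).ge,
      ← Units.val_mul]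
    congr 2
    rw [w.v_mul, neg_add, zpow_add]
    exact mul_mul_mul_comm x y _ _

theorem DVF.spec_unit {F K : Type*} [Field F] [Field K] (w : DVF F K) (p : Fˣ)
    (hp : w.v p = 1) (u : Fˣ) (hu : w.v u = 0) : (w.spec p hp u : K) = w.res (u : F) := by
  simp [DVF.spec, hu]

theorem toQF_unit {E : Type*} [Field E] (x : Eˣ) : toQF (x : E) = toQ x := by
  simp [toQF]

theorem toQ_mul {G : Type*} [CommGroup G] (x y : G) : toQ (x * y) = toQ x + toQ y := by
  simp [toQ, TensorProduct.tmul_add]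

theorem toQ_zpow {G : Type*} [CommGroup G] (x : G) (m : ℤ) :
    toQ (x ^ m) = (m : ℚ) • toQ x := by
  simp [toQ, TensorProduct.smul_tmul']

/-- The valuation as a `ℚ`-linear functional on `Fˣ ⊗ ℚ`. -/
def DVF.vQ {F K : Type*} [Field F] [Field K] (w : DVF F K) : QW Fˣ →ₗ[ℚ] ℚ :=
  LinearMap.liftBaseChange ℚ
    ((Int.castAddHom ℚ).comp (MonoidHom.toAdditiveLeft w.vHom)).toIntLinearMap

theorem DVF.vQ_toQ {F K : Type*} [Field F] [Field K] (w : DVF F K) (x : Fˣ) :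
    w.vQ (toQ x) = w.v x := by
  simp [DVF.vQ, toQ, DVF.vHom]

/-- The linear map `G ⊗ ℚ → G' ⊗ ℚ` induced by a homomorphism. -/
def qMap {G G' : Type*} [CommGroup G] [CommGroup G'] (f : G →* G') : QW G →ₗ[ℚ] QW G' :=
  LinearMap.baseChange ℚ (MonoidHom.toAdditive f).toIntLinearMap

theorem qMap_toQ {G G' : Type*} [CommGroup G] [CommGroup G'] (f : G →* G') (g : G) :
    qMap f (toQ g) = toQ (f g) := by
  simp [qMap, toQ]

/-! ### Existence by contraction -/

/-- Contraction with a linear functional lowers the exterior degree by one. -/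
theorem contractLeft_ιMulti_mem {V : Type*} [AddCommGroup V] [Module ℚ V]
    (d : Module.Dual ℚ V) (n : ℕ) (v : Fin (n + 1) → V) :
    contractLeft d (ExteriorAlgebra.ιMulti ℚ (n + 1) v) ∈ ⋀[ℚ]^n V := by
  induction n with
  | zero =>
    rw [ExteriorAlgebra.ιMulti_succ_apply]
    erw [contractLeft_ι_mul]
    simp [Algebra.smul_def]
  | succ n ih =>
    rw [ExteriorAlgebra.ιMulti_succ_apply]
    erw [contractLeft_ι_mul]
    refine Submodule.sub_mem _ (Submodule.smul_mem _ _
      (ExteriorAlgebra.ιMulti_range ℚ _ (Set.mem_range_self _))) ?_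
    rw [exteriorPower, pow_succ']
    exact Submodule.mul_mem_mul (LinearMap.mem_range_self _ _) (ih _)

/-- A wedge of vectors killed by a functional is killed by contraction with it. -/
theorem contractLeft_ιMulti_eq_zero {V : Type*} [AddCommGroup V] [Module ℚ V]
    (d : Module.Dual ℚ V) (n : ℕ) (v : Fin n → V) (h : ∀ i, d (v i) = 0) :
    contractLeft d (ExteriorAlgebra.ιMulti ℚ n v) = 0 := by
  induction n with
  | zero =>
    rw [ExteriorAlgebra.ιMulti_zero_apply]
    exact contractLeft_one _ d
  | succ n ih =>
    rw [ExteriorAlgebra.ιMulti_succ_apply]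
    erw [contractLeft_ι_mul]
    rw [h 0, zero_smul, zero_sub, neg_eq_zero]
    erw [ih (Matrix.vecTail v) fun i => h i.succ]
    exact mul_zero _

/-- Contracting with `ν` and then specializing along a uniformizer gives a tame symbol:
for units `uᵢ`, Leibniz leaves only the term `ν(x) • (u₂ ∧ … ∧ u_n)`, and the specialization
of a unit is its residue class. -/
theorem exists_tame (F K : Type*) [Field F] [Field K] (w : DVF F K) (n : ℕ) :
    ∃ D : Lambda (n+1) Fˣ →ₗ[ℚ] Lambda n Kˣ, IsTameSymbol w n D := by
  obtain ⟨p, hp⟩ := w.v_surj 1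
  -- the uniformizer enters only through the specialization map applied after contraction
  let T : ExteriorAlgebra ℚ (QW Fˣ) →ₗ[ℚ] ExteriorAlgebra ℚ (QW Kˣ) :=
    (ExteriorAlgebra.map (qMap (w.spec p hp))).toLinearMap ∘ₗ contractLeft w.vQ
  have hT : ∀ x ∈ ⋀[ℚ]^(n+1) (QW Fˣ), T x ∈ ⋀[ℚ]^n (QW Kˣ) := by
    intro x hx
    rw [← ExteriorAlgebra.ιMulti_span_fixedDegree] at hx
    have hle : ∀ y ∈ ⋀[ℚ]^n (QW Fˣ),
        ExteriorAlgebra.map (qMap (w.spec p hp)) y ∈ ⋀[ℚ]^n (QW Kˣ) := by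
      intro y hy
      rw [← ExteriorAlgebra.ιMulti_span_fixedDegree] at hy
      induction hy using Submodule.span_induction with
      | mem y hy =>
        obtain ⟨v, rfl⟩ := hy
        rw [ExteriorAlgebra.map_apply_ιMulti]
        exact ExteriorAlgebra.ιMulti_range ℚ n (Set.mem_range_self _)
      | zero => simp
      | add a b _ _ ha hb => rw [map_add]; exact Submodule.add_mem _ ha hb
      | smul c a _ ha => rw [map_smul]; exact Submodule.smul_mem _ _ ha
    induction hx using Submodule.span_induction with
    | mem y hy =>
      obtain ⟨v, rfl⟩ := hy
      exact hle _ (contractLeft_ιMulti_mem _ _ _)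
    | zero => simp
    | add a b _ _ ha hb => rw [map_add]; exact Submodule.add_mem _ ha hb
    | smul c a _ ha => rw [map_smul]; exact Submodule.smul_mem _ _ ha
  refine ⟨T.restrict hT, fun x u hu => Subtype.ext ?_⟩
  change T (fw _) = (w.v x : ℚ) • fw _
  have h0 : contractLeft w.vQ (fw fun i => (u i : F)) = 0 :=
    contractLeft_ιMulti_eq_zero _ _ _ fun i => by simp [toQF_unit, w.vQ_toQ, hu]
  have h1 : contractLeft w.vQ (fw (Fin.cons (x : F) fun i => (u i : F)))
      = (w.v x : ℚ) • fw fun i => (u i : F) := by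
    rw [fw, ExteriorAlgebra.ιMulti_succ_apply]
    erw [contractLeft_ι_mul]
    erw [h0, mul_zero, sub_zero]
    simp [toQF_unit, w.vQ_toQ]
    rfl
  change ExteriorAlgebra.map _ (contractLeft w.vQ _) = _
  rw [h1, map_smul, fw, ExteriorAlgebra.map_apply_ιMulti, fw]
  congr 2
  funext i
  simp only [Function.comp, toQF_unit, qMap_toQ]
  rw [← w.spec_unit p hp _ (hu i), toQF_unit]

/-! ### Uniqueness by generators -/

/-- The images of a uniformizer and of the units span `Fˣ ⊗ ℚ`. -/
theorem span_generators {F K : Type*} [Field F] [Field K] (w : DVF F K) (p : Fˣ)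
    (hp : w.v p = 1) :
    ⊤ ≤ Submodule.span ℚ (insert (toQ p) (toQ '' {u : Fˣ | w.v u = 0})) := by
  rintro x -
  induction x using TensorProduct.induction_on with
  | zero => exact Submodule.zero_mem _
  | add a b ha hb => exact Submodule.add_mem _ ha hb
  | tmul q g =>
    have h : q ⊗ₜ[ℤ] g = q • toQ g.toMul := by simp [toQ, TensorProduct.smul_tmul']
    rw [h]
    refine Submodule.smul_mem _ _ ?_
    have hg : g.toMul = p ^ (w.v g.toMul) * (g.toMul * p ^ (-w.v g.toMul)) := by
      simp
    rw [hg, toQ_mul, toQ_zpow]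
    exact Submodule.add_mem _
      (Submodule.smul_mem _ _ (Submodule.subset_span (Set.mem_insert _ _)))
      (Submodule.subset_span (Or.inr ⟨_, w.v_mul_zpow_neg hp _, rfl⟩))

/-- Two tame symbols agree on wedges of distinct members of a basis of `Fˣ ⊗ ℚ` made of one
uniformizer and units, since such a wedge has at most one non-unit factor. -/
theorem tame_unique {F K : Type*} [Field F] [Field K] (w : DVF F K) (n : ℕ)
    (D D' : Lambda (n+1) Fˣ →ₗ[ℚ] Lambda n Kˣ) (hD : IsTameSymbol w n D)
    (hD' : IsTameSymbol w n D') : D = D' := by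
  obtain ⟨p, hp⟩ := w.v_surj 1
  have key : ∀ (x : Fˣ) (u : Fin n → Fˣ), (∀ i, w.v (u i) = 0) →
      D (exteriorPower.ιMulti ℚ (n+1) (Fin.cons (toQ x) fun i => toQ (u i)))
      = D' (exteriorPower.ιMulti ℚ (n+1) (Fin.cons (toQ x) fun i => toQ (u i))) := by
    intro x u hu
    have h := (hD x u hu).trans (hD' x u hu).symm
    have e : wedge (Fin.cons (x : F) (fun i => (u i : F))) =
        exteriorPower.ιMulti ℚ (n+1) (Fin.cons (toQ x) fun i => toQ (u i)) := by
      refine Subtype.ext ?_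
      change ExteriorAlgebra.ιMulti ℚ (n+1) _ = ExteriorAlgebra.ιMulti ℚ (n+1) _
      congr 1
      funext i
      refine Fin.cases ?_ (fun i => ?_) i <;> simp [toQF_unit]
    rwa [e] at h
  let A : (⋀[ℚ]^(n+1) (QW Fˣ)) →ₗ[ℚ] Lambda n Kˣ := D
  let A' : (⋀[ℚ]^(n+1) (QW Fˣ)) →ₗ[ℚ] Lambda n Kˣ := D'
  suffices A = A' from this
  apply exteriorPower.linearMap_ext
  have hS := span_generators w p hp
  refine Module.Basis.ext_alternating (Module.Basis.ofSpan hS) fun c hc => ?_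
  have hmem : ∀ i, Module.Basis.ofSpan hS (c i) ∈
      insert (toQ p) (toQ '' {u : Fˣ | w.v u = 0}) := fun i =>
    Module.Basis.ofSpan_subset hS ⟨_, rfl⟩
  generalize hv : (fun i => Module.Basis.ofSpan hS (c i)) = v
  have hinj : Function.Injective v := hv ▸ (Module.Basis.ofSpan hS).injective.comp hc
  replace hmem : ∀ i, v i ∈ insert (toQ p) (toQ '' {u : Fˣ | w.v u = 0}) := hv ▸ hmem
  clear hv
  -- at most one entry is the uniformizer; `j` is its position, if there is one
  obtain ⟨j, hj⟩ : ∃ j, ∀ i, i ≠ j → v i ∈ toQ '' {u : Fˣ | w.v u = 0} := by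
    by_cases h : ∃ j, v j = toQ p
    · obtain ⟨j, hj⟩ := h
      exact ⟨j, fun i hi => (hmem i).resolve_left fun h => hi (hinj (h.trans hj.symm))⟩
    · exact ⟨0, fun i _ => (hmem i).resolve_left fun h' => h ⟨i, h'⟩⟩
  have hx : ∃ x, toQ x = v j := by
    rcases hmem j with h | ⟨x, -, h⟩
    exacts [⟨p, h.symm⟩, ⟨x, h⟩]
  obtain ⟨x, hx⟩ := hx
  have hu : ∀ i : Fin n, ∃ u : Fˣ, w.v u = 0 ∧ toQ u = v (Equiv.swap 0 j i.succ) := fun i => by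
    obtain ⟨u, h, h'⟩ := hj (Equiv.swap 0 j i.succ) (by
      rw [Ne, Equiv.swap_apply_eq_iff, Equiv.swap_apply_right]; exact Fin.succ_ne_zero i)
    exact ⟨u, h, h'⟩
  choose u hu0 huv using hu
  have hcomp : v ∘ Equiv.swap 0 j = Fin.cons (toQ x) fun i => toQ (u i) := by
    funext i
    refine Fin.cases ?_ (fun i => ?_) i
    · simp [hx]
    · simp [huv]
  have h := key x u hu0
  rw [← hcomp] at h
  have h2 : (A.compAlternatingMap (exteriorPower.ιMulti ℚ (n+1))) (v ∘ Equiv.swap 0 j) =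
    (A'.compAlternatingMap (exteriorPower.ιMulti ℚ (n+1))) (v ∘ Equiv.swap 0 j) := h
  -- both sides change by the sign of the same transposition
  rw [AlternatingMap.map_perm, AlternatingMap.map_perm] at h2
  exact smul_left_cancel _ h2

end TameSymbol

/-- Let `(F,ν)` be a discrete valuation field (with residue field `K`) and
`n ≥ 1` (written `n+1` below).  There is a unique ℚ-linear map
`∂_ν : Λ^n(Fˣ) → Λ^{n−1}(k_νˣ)` such that (1) for `n = 1`, `∂_ν(x) = ν(x) ∈ ℚ = Λ^0(k_νˣ)`,
and (2) `∂_ν(x ∧ u₂ ∧ … ∧ u_n) = ν(x)·(ū₂ ∧ … ∧ ū_n)` for all `x ∈ Fˣ` and units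
`u₂, …, u_n` (condition (1) being the case `n = 1` of condition (2)). -/
theorem tame_symbol_exists_unique (F K : Type*) [Field F] [Field K]
    (w : DVF F K) (n : ℕ) :
    ∃! D : Lambda (n+1) Fˣ →ₗ[ℚ] Lambda n Kˣ, IsTameSymbol w n D := by
  obtain ⟨D, hD⟩ := exists_tame F K w n
  exact ⟨D, hD, fun D' hD' => tame_unique w n D' D hD' hD⟩
end

section
/- Let E be a field of characteristic 0 and let z₁,…,z₅ ∈ E be pairwise distinct. For 1≤i≤5 let r_i = cr(z_{j₁},z_{j₂},z_{j₃},z_{j₄}), where j₁<j₂<j₃<j₄ are the four indices different from i. Then each r_i lies in E∖{0,1}, and Σ_{i=1}^{5} (−1)^i · r_i∧(1−r_i) = 0 in Λ²(Eˣ). (Equivalently, the differential δ₂ of the polylogarithmic complex vanishes on the five-term relations defining B₂(E).) -/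
/-!
Write `[ij] = z_i - z_j` for its class in `Eˣ ⊗ ℚ`, where signs are torsion and hence vanish.
Since `1 - cr(a,b,c,d) = -(a-b)(c-d) / ((a-d)(b-c))`, for the cross-ratio `r` of `a, b, c, d`
`r ∧ (1-r) = ([ac]+[bd]-[ad]-[bc]) ∧ ([ab]+[cd]-[ad]-[bc])`.
Expanding this gives the simplicial coboundary
`T(b,c,d) - T(a,c,d) + T(a,b,d) - T(a,b,c)` of the function
`T(a,b,c) = [ab]∧[ac] - [ab]∧[bc] + [ac]∧[bc]` (lemma `amb_wedge_crE`).
The alternating sum over the five points is therefore the coboundary of a coboundary, so it is zero.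
-/

open scoped TensorProduct

set_option maxHeartbeats 1000000
set_option synthInstance.maxHeartbeats 1000000

/-- The cross-ratio of four (distinct) points of a field. -/
def crE {E : Type*} [Field E] (z₁ z₂ z₃ z₄ : E) : E :=
  ((z₁ - z₃) * (z₂ - z₄)) / ((z₁ - z₄) * (z₂ - z₃))

theorem toQF_mul {E : Type*} [Field E] {x y : E} (hx : x ≠ 0) (hy : y ≠ 0) :
    toQF (x * y) = toQF x + toQF y := by
  rw [toQF, toQF, toQF, dif_neg (mul_ne_zero hx hy), dif_neg hx, dif_neg hy, toQ, toQ, toQ,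
    ← TensorProduct.tmul_add, ← ofMul_mul, Units.mk0_mul]

theorem toQF_div {E : Type*} [Field E] {x y : E} (hx : x ≠ 0) (hy : y ≠ 0) :
    toQF (x / y) = toQF x - toQF y := by
  have h := toQF_mul (div_ne_zero hx hy) hy
  rw [div_mul_cancel₀ x hy] at h
  rw [h, add_sub_cancel_right]

/-- Signs are torsion, hence invisible in `Eˣ ⊗ ℚ`. -/
theorem toQF_neg {E : Type*} [Field E] {x : E} (hx : x ≠ 0) : toQF (-x) = toQF x := by
  have h1 : (-1 : E) ≠ 0 := neg_ne_zero.mpr one_ne_zero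
  have one : toQF (1 : E) = 0 := by
    have h := toQF_mul (one_ne_zero (α := E)) one_ne_zero
    rw [mul_one] at h
    exact left_eq_add.mp h
  have h2 : (2 : ℚ) • toQF (-1 : E) = 0 := by
    rw [two_smul, ← toQF_mul h1 h1, neg_one_mul, neg_neg, one]
  have h3 : toQF (-1 : E) = 0 := (smul_eq_zero.mp h2).resolve_left two_ne_zero
  rw [← neg_one_mul, toQF_mul h1 hx, h3, zero_add]

/-- The class of `x` in degree one of the exterior algebra of `Eˣ ⊗ ℚ`. -/
noncomputable def cls {E : Type*} [Field E] (x : E) : ExteriorAlgebra ℚ (QW Eˣ) :=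
  ExteriorAlgebra.ι ℚ (toQF x)

/-- The function of three points of `E` whose simplicial coboundary is
`r ∧ (1 - r)`, with `r` the cross-ratio. -/
noncomputable def triple {E : Type*} [Field E] (a b c : E) : ExteriorAlgebra ℚ (QW Eˣ) :=
  cls (a - b) * cls (a - c) - cls (a - b) * cls (b - c) + cls (a - c) * cls (b - c)

/-- The expansion of `r ∧ (1 - r)` for a cross-ratio `r`. Variables named by pairs of indices
stand for the classes of the differences of the four points. The products of
`x14` with `x23` cancel, and in each surviving product the two pairs share an index. -/
theorem wedge_expand {V : Type*} [AddCommGroup V] [Module ℚ V] (x12 x13 x14 x23 x24 x34 : V) :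
    let e := ExteriorAlgebra.ι ℚ (M := V)
    e (x13 + x24 - (x14 + x23)) * e (x12 + x34 - (x14 + x23)) =
      (e x23 * e x24 - e x23 * e x34 + e x24 * e x34)
      - (e x13 * e x14 - e x13 * e x34 + e x14 * e x34)
      + (e x12 * e x14 - e x12 * e x24 + e x14 * e x24)
      - (e x12 * e x13 - e x12 * e x23 + e x13 * e x23) := by
  intro e
  have sq (x : V) : e x * e x = 0 := ExteriorAlgebra.ι_sq_zero x
  have sw (x y : V) : e x * e y = -(e y * e x) :=
    eq_neg_of_add_eq_zero_left (ExteriorAlgebra.ι_add_mul_swap x y)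
  simp only [map_add, map_sub, mul_add, mul_sub, add_mul, sub_mul, sq]
  rw [sw x13 x12, sw x24 x12, sw x14 x12, sw x23 x12, sw x24 x14, sw x24 x23,
    sw x23 x14]
  abel

theorem one_sub_crE {E : Type*} [Field E] {a b c d : E} (had : a ≠ d) (hbc : b ≠ c) :
    1 - crE a b c d = -(((a - b) * (c - d)) / ((a - d) * (b - c))) := by
  have h1 := sub_ne_zero.mpr had
  have h2 := sub_ne_zero.mpr hbc
  rw [crE]
  field_simp
  ring

/-- `r ∧ (1 - r)` is the simplicial coboundary of `triple`. -/
theorem amb_wedge_crE {E : Type*} [Field E] {a b c d : E} (hab : a ≠ b) (hac : a ≠ c)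
    (had : a ≠ d) (hbc : b ≠ c) (hbd : b ≠ d) (hcd : c ≠ d) :
    (wedge ![crE a b c d, 1 - crE a b c d]).amb =
      triple b c d - triple a c d + triple a b d - triple a b c := by
  rw [← sub_ne_zero] at hab hac had hbc hbd hcd
  have hr : toQF (crE a b c d) =
      toQF (a - c) + toQF (b - d) - (toQF (a - d) + toQF (b - c)) := by
    rw [crE, toQF_div (mul_ne_zero hac hbd) (mul_ne_zero had hbc), toQF_mul hac hbd,
      toQF_mul had hbc]
  have hs : toQF (1 - crE a b c d) =
      toQF (a - b) + toQF (c - d) - (toQF (a - d) + toQF (b - c)) := by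
    rw [one_sub_crE (sub_ne_zero.mp had) (sub_ne_zero.mp hbc),
      toQF_neg (div_ne_zero (mul_ne_zero hab hcd) (mul_ne_zero had hbc)),
      toQF_div (mul_ne_zero hab hcd) (mul_ne_zero had hbc), toQF_mul hab hcd, toQF_mul had hbc]
  have hw : (wedge ![crE a b c d, 1 - crE a b c d]).amb =
      ExteriorAlgebra.ι ℚ (toQF (crE a b c d)) * ExteriorAlgebra.ι ℚ (toQF (1 - crE a b c d)) := by
    simp only [Lambda.amb, wedge, fw, ExteriorAlgebra.ιMulti_apply, List.ofFn_succ, List.ofFn_zero,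
      List.prod_cons, List.prod_nil, mul_one]
    rfl
  rw [hw, hr, hs]
  exact wedge_expand _ _ _ _ _ _

/-- the five-term relation is killed by `δ₂`.  Let `E` be a field of
characteristic `0` and `z₁,…,z₅ ∈ E` pairwise distinct.  For each `i` let
`rᵢ = cr(z_{j₁},z_{j₂},z_{j₃},z_{j₄})` where `j₁<j₂<j₃<j₄` are the indices different
from `i`.  Then each `rᵢ ∈ E∖{0,1}` and `Σᵢ (−1)ⁱ · rᵢ ∧ (1−rᵢ) = 0` in `Λ²(Eˣ)`. -/
theorem five_term_delta_two (E : Type*) [Field E] [CharZero E]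
    (z : Fin 5 → E) (hz : ∀ i j, i ≠ j → z i ≠ z j) :
    (∀ i : Fin 5,
      crE (z (i.succAbove 0)) (z (i.succAbove 1)) (z (i.succAbove 2)) (z (i.succAbove 3)) ≠ 0 ∧
      crE (z (i.succAbove 0)) (z (i.succAbove 1)) (z (i.succAbove 2)) (z (i.succAbove 3)) ≠ 1) ∧
    ∑ i : Fin 5, ((-1 : ℚ) ^ ((i : ℕ) + 1)) •
      wedge ![crE (z (i.succAbove 0)) (z (i.succAbove 1)) (z (i.succAbove 2)) (z (i.succAbove 3)),
        1 - crE (z (i.succAbove 0)) (z (i.succAbove 1)) (z (i.succAbove 2)) (z (i.succAbove 3))]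
      = (0 : Lambda 2 Eˣ) := by
  have inj (i : Fin 5) {j k : Fin 4} (h : j ≠ k) : z (i.succAbove j) ≠ z (i.succAbove k) :=
    hz _ _ fun e => h (Fin.succAbove_right_injective e)
  have sub (i : Fin 5) {j k : Fin 4} (h : j ≠ k) :
      z (i.succAbove j) - z (i.succAbove k) ≠ 0 := sub_ne_zero.mpr (inj i h)
  refine ⟨fun i => ⟨?_, ?_⟩, ?_⟩
  · exact div_ne_zero (mul_ne_zero (sub i (by decide)) (sub i (by decide)))
      (mul_ne_zero (sub i (by decide)) (sub i (by decide)))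
  · intro h
    have h1 := one_sub_crE (inj i (j := 0) (k := 3) (by decide)) (inj i (j := 1) (k := 2) (by decide))
    rw [h, sub_self] at h1
    exact neg_ne_zero.mpr (div_ne_zero (mul_ne_zero (sub i (by decide)) (sub i (by decide)))
      (mul_ne_zero (sub i (by decide)) (sub i (by decide)))) h1.symm
  · have key (i : Fin 5) := amb_wedge_crE (inj i (j := 0) (k := 1) (by decide))
      (inj i (j := 0) (k := 2) (by decide)) (inj i (j := 0) (k := 3) (by decide))
      (inj i (j := 1) (k := 2) (by decide)) (inj i (j := 1) (k := 3) (by decide))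
      (inj i (j := 2) (k := 3) (by decide))
    -- The equality may be checked in the ambient exterior algebra.
    let A : Lambda 2 Eˣ →ₗ[ℚ] ExteriorAlgebra ℚ (QW Eˣ) := (⋀[ℚ]^2 (QW Eˣ)).subtype
    have hA : Function.Injective A := Subtype.val_injective
    apply hA
    have key' (i : Fin 5) := (rfl : A (wedge ![_, _]) = _).trans (key i)
    rw [map_sum, map_zero]
    simp only [map_smul, key']
    simp only [Fin.sum_univ_five]
    simp [Fin.succAbove, Fin.lt_def, pow_succ]
    abel
end

section
/- Let K be a field and let (a₁,b₁),…,(a₅,b₅) ∈ K² be five vectors that are pairwise linearly independent. Let L_i = a_i·X + b_i, regarded as a nonzero element of the rational function field K(X). For indices p<q<r<s define ω(p,q,r,s) = (L_p L_s^{−1}) ∧ (L_q L_s^{−1}) ∧ (L_r L_s^{−1}) ∈ Λ³(K(X)ˣ). Then Σ_{i=1}^{5} (−1)^i ω(j₁,j₂,j₃,j₄) = 0, where for each i, j₁<j₂<j₃<j₄ are the four indices different from i. -/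
/-!
The relation is the identity `∂ ∘ ∂ = 0` in disguise. Write `ℓᵢ` for the class of `Lᵢ` in
`K(X)ˣ ⊗ ℚ`. Pairwise independence forces every `Lᵢ` to be nonzero, so the class of `L_p / L_s`
is `ℓ_p - ℓ_s` (`toQF_div`), and expanding the wedge gives (`ιMulti_sub_three`)
`ω(p,q,r,s) = ℓ_p∧ℓ_q∧ℓ_r - ℓ_p∧ℓ_q∧ℓ_s + ℓ_p∧ℓ_r∧ℓ_s - ℓ_q∧ℓ_r∧ℓ_s`,
which is, up to sign, the alternating sum of the four triples obtained by deleting one index.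
In the alternating sum of `ω` over the five deleted indices, each triple therefore appears
twice, with opposite signs.
-/

open scoped TensorProduct

set_option maxHeartbeats 1000000
set_option synthInstance.maxHeartbeats 1000000

/-- The linear polynomial `a·X + b`, as a rational function. -/
noncomputable def linePoly {K : Type*} [Field K] (a b : K) : RatFunc K :=
  RatFunc.C a * RatFunc.X + RatFunc.C b

theorem linePoly_ne_zero {K : Type*} [Field K] {a b : K} (h : (a, b) ≠ (0, 0)) :
    linePoly a b ≠ 0 := by
  intro h0
  have h1 : algebraMap (Polynomial K) (RatFunc K)
      (Polynomial.C a * Polynomial.X + Polynomial.C b) = 0 := by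
    simpa [linePoly] using h0
  have h2 := (map_eq_zero_iff _ (RatFunc.algebraMap_injective K)).1 h1
  apply h
  have ha := congrArg (fun p => Polynomial.coeff p 1) h2
  have hb := congrArg (fun p => Polynomial.coeff p 0) h2
  simp [Polynomial.coeff_C] at ha hb
  rw [ha, hb]

/-- The wedge of the differences `p - s, q - s, r - s` is the signed sum of the wedges of the
four triples chosen from `p, q, r, s`. -/
theorem ιMulti_sub_three {M : Type*} [AddCommGroup M] [Module ℚ M] (p q r s : M) :
    ExteriorAlgebra.ιMulti ℚ 3 ![p - s, q - s, r - s] =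
      ExteriorAlgebra.ιMulti ℚ 3 ![p, q, r] - ExteriorAlgebra.ιMulti ℚ 3 ![p, q, s]
      + ExteriorAlgebra.ιMulti ℚ 3 ![p, r, s] - ExteriorAlgebra.ιMulti ℚ 3 ![q, r, s] := by
  have hss := ExteriorAlgebra.ι_sq_zero (R := ℚ) s
  have hq := eq_neg_of_add_eq_zero_left (ExteriorAlgebra.ι_add_mul_swap (R := ℚ) s q)
  have hr := eq_neg_of_add_eq_zero_left (ExteriorAlgebra.ι_add_mul_swap (R := ℚ) s r)
  simp only [ExteriorAlgebra.ιMulti_apply, List.ofFn_succ, List.ofFn_zero, List.prod_cons,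
    List.prod_nil, mul_one, Matrix.cons_val_zero, Matrix.cons_val_succ, map_sub]
  generalize ExteriorAlgebra.ι ℚ p = P at *
  generalize ExteriorAlgebra.ι ℚ q = Q at *
  generalize ExteriorAlgebra.ι ℚ r = R at *
  generalize ExteriorAlgebra.ι ℚ s = S at *
  -- `S` is moved to the right of `Q` and `R`, where it meets another `S` or stays last.
  have h1 : S * (Q * R) = Q * (R * S) := by
    rw [← mul_assoc, hq, neg_mul, mul_assoc, hr, mul_neg, neg_neg]
  have h2 : S * (Q * S) = 0 := by rw [← mul_assoc, hq, neg_mul, mul_assoc, hss, mul_zero, neg_zero]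
  have h3 : S * (R * S) = 0 := by rw [← mul_assoc, hr, neg_mul, mul_assoc, hss, mul_zero, neg_zero]
  simp only [mul_sub, sub_mul, hr, hss, h1, h2, h3, mul_neg, mul_zero]
  abel

theorem wedge_div_amb {E : Type*} [Field E] {p q r s : E}
    (hp : p ≠ 0) (hq : q ≠ 0) (hr : r ≠ 0) (hs : s ≠ 0) :
    (wedge ![p / s, q / s, r / s]).amb =
      fw ![p, q, r] - fw ![p, q, s] + fw ![p, r, s] - fw ![q, r, s] := by
  have key : ∀ x y z : E, fw ![x, y, z] =
      ExteriorAlgebra.ιMulti ℚ 3 ![toQF x, toQF y, toQF z] := by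
    intro x y z
    unfold fw
    congr 1
    ext i
    fin_cases i <;> rfl
  change fw ![p / s, q / s, r / s] = _
  simp only [key, toQF_div, hp, hq, hr, hs, ne_eq, not_false_eq_true]
  exact ιMulti_sub_three _ _ _ _

/-- `Lambda.amb` as a linear map. -/
noncomputable def ambHom (n : ℕ) (G : Type*) [CommGroup G] :
    Lambda n G →ₗ[ℚ] ExteriorAlgebra ℚ (QW G) :=
  Submodule.subtype (⋀[ℚ]^n (QW G))

/-- five-term relation for the forms `ω`.  Let `K` be a field and
`(a₁,b₁),…,(a₅,b₅) ∈ K²` pairwise linearly independent; `Lᵢ = aᵢX + bᵢ ∈ K(X)ˣ`.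
For `p<q<r<s` set `ω(p,q,r,s) = (L_p/L_s) ∧ (L_q/L_s) ∧ (L_r/L_s) ∈ Λ³(K(X)ˣ)`.
Then `Σᵢ (−1)ⁱ ω(j₁,j₂,j₃,j₄) = 0`, where `j₁<j₂<j₃<j₄` are the indices different
from `i`. -/
theorem five_term_omega (K : Type*) [Field K] (a b : Fin 5 → K)
    (hli : ∀ i j : Fin 5, i ≠ j → LinearIndependent K ![(a i, b i), (a j, b j)]) :
    ∑ i : Fin 5, ((-1 : ℚ) ^ ((i : ℕ) + 1)) •
      wedge ![linePoly (a (i.succAbove 0)) (b (i.succAbove 0)) /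
                linePoly (a (i.succAbove 3)) (b (i.succAbove 3)),
              linePoly (a (i.succAbove 1)) (b (i.succAbove 1)) /
                linePoly (a (i.succAbove 3)) (b (i.succAbove 3)),
              linePoly (a (i.succAbove 2)) (b (i.succAbove 2)) /
                linePoly (a (i.succAbove 3)) (b (i.succAbove 3))]
      = (0 : Lambda 3 (RatFunc K)ˣ) := by
  have hL : ∀ i, linePoly (a i) (b i) ≠ 0 := fun i => by
    obtain ⟨j, hj⟩ := exists_ne i
    exact linePoly_ne_zero ((hli i j hj.symm).ne_zero 0)
  have hinj : Function.Injective (ambHom 3 (RatFunc K)ˣ) := Subtype.val_injective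
  apply hinj
  rw [map_sum, map_zero]
  have hw : ∀ p q r s : Fin 5, ambHom 3 (RatFunc K)ˣ
      (wedge ![linePoly (a p) (b p) / linePoly (a s) (b s),
        linePoly (a q) (b q) / linePoly (a s) (b s),
        linePoly (a r) (b r) / linePoly (a s) (b s)]) = _ :=
    fun p q r s => wedge_div_amb (hL p) (hL q) (hL r) (hL s)
  simp only [map_smul, hw]
  rw [Fin.sum_univ_five]
  -- Evaluates every `i.succAbove k` to a numeral.
  simp only [show ∀ k : Fin 4, (0 : Fin 5).succAbove k = k.succ by decide,
    show (1 : Fin 5).succAbove 0 = 0 by decide, show (1 : Fin 5).succAbove 1 = 2 by decide,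
    show (1 : Fin 5).succAbove 2 = 3 by decide, show (1 : Fin 5).succAbove 3 = 4 by decide,
    show (2 : Fin 5).succAbove 0 = 0 by decide, show (2 : Fin 5).succAbove 1 = 1 by decide,
    show (2 : Fin 5).succAbove 2 = 3 by decide, show (2 : Fin 5).succAbove 3 = 4 by decide,
    show (3 : Fin 5).succAbove 0 = 0 by decide, show (3 : Fin 5).succAbove 1 = 1 by decide,
    show (3 : Fin 5).succAbove 2 = 2 by decide, show (3 : Fin 5).succAbove 3 = 4 by decide,
    show (4 : Fin 5).succAbove 0 = 0 by decide, show (4 : Fin 5).succAbove 1 = 1 by decide,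
    show (4 : Fin 5).succAbove 2 = 2 by decide, show (4 : Fin 5).succAbove 3 = 3 by decide,
    show (0 : Fin 4).succ = 1 by decide, show (1 : Fin 4).succ = 2 by decide,
    show (2 : Fin 4).succ = 3 by decide, show (3 : Fin 4).succ = 4 by decide]
  norm_num [show ((2 : Fin 5) : ℕ) = 2 from rfl, show ((3 : Fin 5) : ℕ) = 3 from rfl,
    show ((4 : Fin 5) : ℕ) = 4 from rfl]
  abel
end

section
/- Let 0→R→A→B→0 be a short exact sequence of ℚ-vector spaces (R a subspace of A) and m≥1. Then the sequence S²(R)⊗Λ^{m−2}(A) →^α R⊗Λ^{m−1}(A) →^β Λ^m(A) →^γ Λ^m(B) → 0 is exact at R⊗Λ^{m−1}(A), at Λ^m(A) and at Λ^m(B), where α(r·s ⊗ w) = r⊗(s∧w) + s⊗(r∧w), β(r⊗w) = r∧w (with r regarded as an element of A), and γ is the m-th exterior power of the projection A→B. -/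
/-!
The argument works in all degrees at once, on `R ⊗ Λ(A) → Λ(A)`, and then projects to a fixed
degree, which is harmless because left multiplication by a vector is homogeneous.

Exactness at `R ⊗ Λ(A)`. Choose a projection `p : A → R`. It gives a map
`h : Λ(A) → R ⊗ Λ(A)` with `h(a ∧ w) = p(a) ⊗ w - a · h(w)` (`Koszul.htpy`), and `D = β ∘ h` is
the derivation of `Λ(A)` extending `p` (`Koszul.der`). Modulo the image of `α` one has
`h ∘ β = 1 ⊗ (1 + D)` (`Koszul.lTensor_sub_htpy_beta_mem`), so if `β(z) = 0` then
`(1 ⊗ (1 + D)) z` lies in the image of `α`. As `A = R ⊕ ker p`, the algebra `Λ(A)` is spanned by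
eigenvectors of `D` with eigenvalues in `ℕ` (`Koszul.iSup_eigenspace_der`), so in characteristic
zero `1 + D` and `2 + D` are bijective. For `s ∈ R` one has `(1 + D)(s ∧ w) = s ∧ (2 + D) w`, so
the image of `α` is contained in its image under `1 ⊗ (1 + D)` (`Koszul.alphaSpan_le_map`), and
injectivity of `1 ⊗ (1 + D)` puts `z` itself in the image of `α`.

Exactness at `Λ(A)` and `Λ(B)`. Let `σ : A ⧸ R → A` be the section with `σ(ā) = a - p(a)`. Then
`Λ(σ)` is a section of `Λ(A) → Λ(A ⧸ R)`, and `x - Λ(σ)(x̄)` lies in the image of `β` for every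
`x`, by induction on products of vectors (`Koszul.sub_map_sect_mem`).
-/

open scoped TensorProduct

set_option maxHeartbeats 1000000
set_option synthInstance.maxHeartbeats 1000000

noncomputable section

/-- `Λ^j(A)` for an integer `j`, as a subspace of the exterior algebra
(`Λ^j(A) = 0` for `j < 0`). -/
def LamZ (A : Type*) [AddCommGroup A] [Module ℚ A] (j : ℤ) :
    Submodule ℚ (ExteriorAlgebra ℚ A) :=
  if 0 ≤ j then ⋀[ℚ]^(j.toNat) A else ⊥

/-- The map `β : R ⊗ Λ^{m−1}(A) → Λ^m(A)`, `β(r⊗w) = r ∧ w` (here `m − 1 = n`, and the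
values are taken in the ambient exterior algebra). -/
def betaMap (A : Type*) [AddCommGroup A] [Module ℚ A] (R : Submodule ℚ A) (n : ℕ) :
    (R ⊗[ℚ] (⋀[ℚ]^n A)) →ₗ[ℚ] ExteriorAlgebra ℚ A :=
  TensorProduct.lift ((LinearMap.mul ℚ (ExteriorAlgebra ℚ A)).compl₁₂
    ((ExteriorAlgebra.ι ℚ).comp R.subtype) (Submodule.subtype _))

namespace Koszul

open ExteriorAlgebra TensorProduct

variable {A : Type*} [AddCommGroup A] [Module ℚ A] {R : Submodule ℚ A}

/-! ### The Koszul differential on the whole exterior algebra -/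

/-- The map `r ⊗ w ↦ r ∧ w` on `R ⊗ Λ(A)`, all degrees at once. -/
def beta (R : Submodule ℚ A) : R ⊗[ℚ] ExteriorAlgebra ℚ A →ₗ[ℚ] ExteriorAlgebra ℚ A :=
  TensorProduct.lift ((LinearMap.mul ℚ (ExteriorAlgebra ℚ A)).comp ((ι ℚ).comp R.subtype))

@[simp] lemma beta_tmul (r : R) (w : ExteriorAlgebra ℚ A) :
    beta R (r ⊗ₜ w) = ι ℚ (r : A) * w := by
  simp [beta]

/-- Left multiplication by `a` on the second factor of `R ⊗ Λ(A)`. -/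
def act (R : Submodule ℚ A) (a : A) :
    R ⊗[ℚ] ExteriorAlgebra ℚ A →ₗ[ℚ] R ⊗[ℚ] ExteriorAlgebra ℚ A :=
  LinearMap.lTensor R (LinearMap.mulLeft ℚ (ι ℚ a))

@[simp] lemma act_tmul (a : A) (r : R) (w : ExteriorAlgebra ℚ A) :
    act R a (r ⊗ₜ w) = r ⊗ₜ (ι ℚ a * w) := by
  simp [act]

lemma act_add (a b : A) (t : R ⊗[ℚ] ExteriorAlgebra ℚ A) :
    act R (a + b) t = act R a t + act R b t := by
  induction t with
  | zero => simp
  | tmul r w => simp [add_mul, tmul_add]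
  | add x y hx hy => simp only [map_add, hx, hy]; abel

lemma act_smul (c : ℚ) (a : A) (t : R ⊗[ℚ] ExteriorAlgebra ℚ A) :
    act R (c • a) t = c • act R a t := by
  induction t with
  | zero => simp
  | tmul r w => simp
  | add x y hx hy => simp only [map_add, hx, hy, smul_add]

lemma act_act (a : A) (t : R ⊗[ℚ] ExteriorAlgebra ℚ A) : act R a (act R a t) = 0 := by
  induction t with
  | zero => simp
  | tmul r w => simp [← mul_assoc]
  | add x y hx hy => simp only [map_add, hx, hy, add_zero]

lemma ι_mul_swap (a b : A) (w : ExteriorAlgebra ℚ A) :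
    ι ℚ a * (ι ℚ b * w) = -(ι ℚ b * (ι ℚ a * w)) := by
  rw [← mul_assoc, ← mul_assoc, ← neg_mul, eq_neg_of_add_eq_zero_left (ι_add_mul_swap a b)]

lemma beta_act (a : A) (t : R ⊗[ℚ] ExteriorAlgebra ℚ A) :
    beta R (act R a t) = -(ι ℚ a * beta R t) := by
  induction t with
  | zero => simp
  | tmul r w => simp [ι_mul_swap a]
  | add x y hx hy => simp only [map_add, hx, hy, mul_add, neg_add]

/-! ### The contracting homotopy attached to a projection -/

/-- One step of the recursion defining `htpy`: `(w, t) ↦ p(a) ⊗ w - a · t`. -/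
def htpyStep (p : A →ₗ[ℚ] R) :
    A →ₗ[ℚ] (ExteriorAlgebra ℚ A × (R ⊗[ℚ] ExteriorAlgebra ℚ A)) →ₗ[ℚ]
      R ⊗[ℚ] ExteriorAlgebra ℚ A :=
  LinearMap.mk₂ ℚ (fun a x => p a ⊗ₜ x.1 - act R a x.2)
    (fun a b x => by simp only [map_add, add_tmul, act_add]; abel)
    (fun c a x => by simp only [map_smul, smul_tmul', act_smul, smul_sub])
    (fun a x y => by simp only [Prod.fst_add, Prod.snd_add, map_add, tmul_add]; abel)
    (fun c a x => by simp only [Prod.smul_fst, Prod.smul_snd, map_smul, tmul_smul, smul_sub])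

/-- The map `Λ(A) → R ⊗ Λ(A)` sending `a₁ ∧ … ∧ a_k` to
`∑ᵢ (-1)ⁱ⁻¹ p(aᵢ) ⊗ a₁ ∧ … âᵢ … ∧ a_k`. -/
def htpy (p : A →ₗ[ℚ] R) : ExteriorAlgebra ℚ A →ₗ[ℚ] R ⊗[ℚ] ExteriorAlgebra ℚ A :=
  CliffordAlgebra.foldr' _ (htpyStep p)
    (fun a x t => by simp [htpyStep, act_act]) 0

lemma htpy_ι_mul (p : A →ₗ[ℚ] R) (a : A) (w : ExteriorAlgebra ℚ A) :
    htpy p (ι ℚ a * w) = p a ⊗ₜ w - act R a (htpy p w) :=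
  CliffordAlgebra.foldr'_ι_mul _ _ _ _ _ _

lemma htpy_algebraMap (p : A →ₗ[ℚ] R) (c : ℚ) :
    htpy p (algebraMap ℚ (ExteriorAlgebra ℚ A) c) = 0 :=
  (CliffordAlgebra.foldr'_algebraMap _ _ _ _ _).trans (smul_zero c)

/-- The derivation of `Λ(A)` extending `p`, viewed as an endomorphism of `A`. It multiplies
a product of `i` elements of `R` and `j` elements of `ker p` by `i`. -/
def der (p : A →ₗ[ℚ] R) : Module.End ℚ (ExteriorAlgebra ℚ A) := beta R ∘ₗ htpy p

lemma der_ι_mul (p : A →ₗ[ℚ] R) (a : A) (w : ExteriorAlgebra ℚ A) :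
    der p (ι ℚ a * w) = ι ℚ (p a : A) * w + ι ℚ a * der p w := by
  simp [der, htpy_ι_mul, beta_act]

/-! ### Diagonalisation of the derivation -/

/-- Writing `a = p(a) + (a - p(a))`, the first summand raises the eigenvalue by one and the
second preserves it. -/
lemma ι_mul_mem (p : A →ₗ[ℚ] R) (hp : ∀ r : R, p r = r) (a : A) {w : ExteriorAlgebra ℚ A}
    (hw : w ∈ ⨆ i : ℕ, (der p).eigenspace (i : ℚ)) :
    ι ℚ a * w ∈ ⨆ i : ℕ, (der p).eigenspace (i : ℚ) := by
  induction hw using Submodule.iSup_induction' with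
  | zero => simp
  | add x y _ _ hx hy => rw [mul_add]; exact add_mem hx hy
  | mem i x hx =>
    rw [Module.End.mem_eigenspace_iff] at hx
    have ha : ι ℚ a * x = ι ℚ (p a : A) * x + ι ℚ (a - p a) * x := by
      rw [← add_mul, ← map_add, add_sub_cancel]
    rw [ha]
    refine add_mem (Submodule.mem_iSup_of_mem (i + 1) ?_) (Submodule.mem_iSup_of_mem i ?_)
    · rw [Module.End.mem_eigenspace_iff, der_ι_mul, hp, hx, mul_smul_comm]
      push_cast
      rw [add_smul, one_smul, add_comm]
    · rw [Module.End.mem_eigenspace_iff, der_ι_mul, map_sub, hp, hx, mul_smul_comm]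
      simp

lemma iSup_eigenspace_der (p : A →ₗ[ℚ] R) (hp : ∀ r : R, p r = r) :
    ⨆ i : ℕ, (der p).eigenspace (i : ℚ) = ⊤ := by
  refine eq_top_iff.2 fun w _ => ?_
  induction w using CliffordAlgebra.left_induction with
  | algebraMap c =>
    refine Submodule.mem_iSup_of_mem 0 ?_
    rw [Module.End.mem_eigenspace_iff]
    simp only [der, LinearMap.comp_apply, Nat.cast_zero, zero_smul]
    erw [htpy_algebraMap, map_zero]
  | add x y hx hy => exact add_mem (hx trivial) (hy trivial)
  | ι_mul x a hx => exact ι_mul_mem p hp a (hx trivial)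

/-- An endomorphism diagonalisable with eigenvalues in `ℕ` has no negative eigenvalue. -/
lemma injective_smul_add {V : Type*} [AddCommGroup V] [Module ℚ V] (f : Module.End ℚ V)
    (hf : ⨆ i : ℕ, f.eigenspace (i : ℚ) = ⊤) {k : ℚ} (hk : 0 < k) :
    Function.Injective (k • (1 : Module.End ℚ V) + f) := by
  rw [← LinearMap.ker_eq_bot, eq_bot_iff]
  intro x hx
  have hx' : x ∈ f.eigenspace (-k) := by
    rw [Module.End.mem_eigenspace_iff, neg_smul]
    exact eq_neg_of_add_eq_zero_right (by simpa using hx)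
  have hdis := f.eigenspaces_iSupIndep (-k)
  refine (Submodule.mem_bot ℚ).2 (Submodule.disjoint_def.1 hdis x hx' ?_)
  have hle : ⨆ i : ℕ, f.eigenspace (i : ℚ) ≤ ⨆ j, ⨆ (_ : j ≠ -k), f.eigenspace j := by
    refine iSup_le fun i => le_iSup₂_of_le (i : ℚ) ?_ le_rfl
    have : (0 : ℚ) ≤ i := Nat.cast_nonneg i
    intro h
    linarith
  exact hle (hf ▸ Submodule.mem_top)

lemma surjective_smul_add {V : Type*} [AddCommGroup V] [Module ℚ V] (f : Module.End ℚ V)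
    (hf : ⨆ i : ℕ, f.eigenspace (i : ℚ) = ⊤) {k : ℚ} (hk : 0 < k) :
    Function.Surjective (k • (1 : Module.End ℚ V) + f) := by
  rw [← LinearMap.range_eq_top, eq_top_iff, ← hf]
  refine iSup_le fun i x hx => ⟨(k + i)⁻¹ • x, ?_⟩
  rw [Module.End.mem_eigenspace_iff] at hx
  have : k + (i : ℚ) ≠ 0 := by positivity
  simp only [LinearMap.add_apply, LinearMap.smul_apply, Module.End.one_apply, map_smul, hx]
  rw [← add_smul, smul_smul, inv_mul_cancel₀ this, one_smul]

/-! ### Exactness in all degrees at once -/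

/-- The image of `S²(R) ⊗ Λ(A)` in `R ⊗ Λ(A)` under `rs ⊗ w ↦ r ⊗ (s ∧ w) + s ⊗ (r ∧ w)`. -/
def alphaSpan (R : Submodule ℚ A) : Submodule ℚ (R ⊗[ℚ] ExteriorAlgebra ℚ A) :=
  Submodule.span ℚ {z | ∃ (r s : R) (w : ExteriorAlgebra ℚ A),
    z = r ⊗ₜ (ι ℚ (s : A) * w) + s ⊗ₜ (ι ℚ (r : A) * w)}

lemma act_add_tmul_beta_mem (r : R) (t : R ⊗[ℚ] ExteriorAlgebra ℚ A) :
    act R r t + r ⊗ₜ beta R t ∈ alphaSpan R := by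
  induction t with
  | zero => simp
  | tmul s w =>
    refine Submodule.subset_span ⟨s, r, w, ?_⟩
    simp
  | add x y hx hy =>
    convert add_mem hx hy using 1
    simp only [map_add, tmul_add]
    abel

/-- Modulo the image of `α`, the composite `htpy ∘ β` is `1 ⊗ (1 + D)`. -/
lemma lTensor_sub_htpy_beta_mem (p : A →ₗ[ℚ] R) (hp : ∀ r : R, p r = r)
    (z : R ⊗[ℚ] ExteriorAlgebra ℚ A) :
    LinearMap.lTensor R ((1 : ℚ) • 1 + der p) z - htpy p (beta R z) ∈ alphaSpan R := by
  induction z with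
  | zero => simp
  | tmul r w =>
    convert act_add_tmul_beta_mem r (htpy p w) using 1
    simp [htpy_ι_mul, hp, der]
    abel
  | add x y hx hy =>
    convert add_mem hx hy using 1
    simp only [map_add]
    abel

/-- The image of `α` is contained in its own image under `1 ⊗ (1 + D)`, because
`(1 + D)(s ∧ w) = s ∧ (2 + D)w` for `s ∈ R` and `2 + D` is surjective. -/
lemma alphaSpan_le_map (p : A →ₗ[ℚ] R) (hp : ∀ r : R, p r = r) :
    alphaSpan R ≤ (alphaSpan R).map (LinearMap.lTensor R ((1 : ℚ) • 1 + der p)) := by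
  refine Submodule.span_le.2 ?_
  rintro _ ⟨r, s, w, rfl⟩
  obtain ⟨v, rfl⟩ := surjective_smul_add _ (iSup_eigenspace_der p hp) (k := 2) two_pos w
  refine ⟨_, Submodule.subset_span ⟨r, s, v, rfl⟩, ?_⟩
  have key (q : R) : ((1 : ℚ) • (1 : Module.End ℚ (ExteriorAlgebra ℚ A)) + der p)
      (ι ℚ (q : A) * v) = ι ℚ (q : A) * (((2 : ℚ) • 1 + der p : Module.End ℚ _) v) := by
    simp only [one_smul, LinearMap.add_apply, Module.End.one_apply, der_ι_mul, hp,
      mul_add, two_smul]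
    abel
  rw [map_add, LinearMap.lTensor_tmul, LinearMap.lTensor_tmul, key, key]

lemma mem_alphaSpan_of_beta_eq_zero (p : A →ₗ[ℚ] R) (hp : ∀ r : R, p r = r)
    {z : R ⊗[ℚ] ExteriorAlgebra ℚ A} (hz : beta R z = 0) : z ∈ alphaSpan R := by
  have h := lTensor_sub_htpy_beta_mem p hp z
  rw [hz, map_zero, sub_zero] at h
  obtain ⟨z', hz', h'⟩ := alphaSpan_le_map p hp h
  have hinj := Module.Flat.lTensor_preserves_injective_linearMap (M := R) _
    (injective_smul_add _ (iSup_eigenspace_der p hp) one_pos)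
  rwa [← hinj h']

/-- The section of `A → A ⧸ R` complementary to the projection `p`. -/
def sect (p : A →ₗ[ℚ] R) (hp : ∀ r : R, p r = r) : (A ⧸ R) →ₗ[ℚ] A :=
  R.liftQ (LinearMap.id - R.subtype ∘ₗ p) fun r hr => by
    have := hp ⟨r, hr⟩
    simp_all

lemma sect_mkQ (p : A →ₗ[ℚ] R) (hp : ∀ r : R, p r = r) (a : A) :
    sect p hp (R.mkQ a) = a - p a := by
  simp [sect]

lemma mkQ_comp_sect (p : A →ₗ[ℚ] R) (hp : ∀ r : R, p r = r) :
    R.mkQ ∘ₗ sect p hp = LinearMap.id := by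
  ext a
  simp [sect]

lemma map_mkQ_map_sect (p : A →ₗ[ℚ] R) (hp : ∀ r : R, p r = r)
    (y : ExteriorAlgebra ℚ (A ⧸ R)) :
    ExteriorAlgebra.map R.mkQ (ExteriorAlgebra.map (sect p hp) y) = y := by
  rw [← AlgHom.comp_apply, map_comp_map, mkQ_comp_sect, ExteriorAlgebra.map_id, AlgHom.id_apply]

lemma sub_map_sect_mem (p : A →ₗ[ℚ] R) (hp : ∀ r : R, p r = r) (x : ExteriorAlgebra ℚ A) :
    x - ExteriorAlgebra.map (sect p hp) (ExteriorAlgebra.map R.mkQ x) ∈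
      LinearMap.range (beta R) := by
  induction x using CliffordAlgebra.left_induction with
  | algebraMap c =>
    erw [AlgHom.commutes, AlgHom.commutes, sub_self]
    exact zero_mem _
  | add x y hx hy =>
    convert add_mem hx hy using 1
    simp only [map_add]
    abel
  | ι_mul x a hx =>
    change ι ℚ a * x - ExteriorAlgebra.map _ (ExteriorAlgebra.map _ (ι ℚ a * x)) ∈ _
    obtain ⟨t, ht⟩ := hx
    refine ⟨p a ⊗ₜ ExteriorAlgebra.map (sect p hp) (ExteriorAlgebra.map R.mkQ x)
      - act R a t, ?_⟩
    rw [map_sub, beta_act, ht, beta_tmul, map_mul, map_mul, map_apply_ι, map_apply_ι,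
      sect_mkQ, map_sub]
    noncomm_ring

lemma map_mkQ_beta (t : R ⊗[ℚ] ExteriorAlgebra ℚ A) :
    ExteriorAlgebra.map R.mkQ (beta R t) = 0 := by
  induction t with
  | zero => simp
  | tmul r w =>
    rw [beta_tmul, map_mul, map_apply_ι, Submodule.mkQ_apply,
      (Submodule.Quotient.mk_eq_zero R).2 r.2, map_zero, zero_mul]
  | add x y hx hy => rw [map_add, map_add, hx, hy, add_zero]

/-! ### Passage to a fixed degree -/

/-- The projection of `Λ(A)` onto its degree `n` component. -/
def comp (A : Type*) [AddCommGroup A] [Module ℚ A] (n : ℕ) :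
    ExteriorAlgebra ℚ A →ₗ[ℚ] ⋀[ℚ]^n A :=
  DirectSum.component ℚ ℕ (fun i => ⋀[ℚ]^i A) n ∘ₗ
    (DirectSum.decomposeLinearEquiv (fun i : ℕ => ⋀[ℚ]^i A)).toLinearMap

lemma comp_coe {n : ℕ} (x : ⋀[ℚ]^n A) : comp A n x = x := by
  simp [comp, DirectSum.component.lof_self]

lemma ι_mem (a : A) : ι ℚ a ∈ ⋀[ℚ]^1 A := by
  simpa only [pow_one] using LinearMap.mem_range_self (ι ℚ) a

lemma coe_comp_succ_ι_mul (n : ℕ) (a : A) (w : ExteriorAlgebra ℚ A) :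
    (comp A (n + 1) (ι ℚ a * w) : ExteriorAlgebra ℚ A) = ι ℚ a * comp A n w :=
  DirectSum.coe_decompose_mul_of_left_mem_of_le (fun i : ℕ => ⋀[ℚ]^i A) (ι_mem a)
    (Nat.le_add_left 1 n)

lemma comp_zero_ι_mul (a : A) (w : ExteriorAlgebra ℚ A) : comp A 0 (ι ℚ a * w) = 0 :=
  Subtype.ext <| DirectSum.coe_decompose_mul_of_left_mem_of_not_le (fun i : ℕ => ⋀[ℚ]^i A)
    (ι_mem a) (by decide)

/-- The degree `n` part of `a ∧ w` is `a ∧ v`, where `v` is the degree `n - 1` part of `w`; in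
degree `0` this reads `v = 0`, matching `Λ^{-1}(A) = 0`. -/
lemma exists_mem_LamZ (n : ℕ) (w : ExteriorAlgebra ℚ A) :
    ∃ v ∈ LamZ A ((n : ℤ) - 1), ∀ a : A,
      (comp A n (ι ℚ a * w) : ExteriorAlgebra ℚ A) = ι ℚ a * v := by
  cases n with
  | zero => exact ⟨0, zero_mem _, fun a => by rw [comp_zero_ι_mul, mul_zero]; rfl⟩
  | succ n =>
    refine ⟨comp A n w, ?_, fun a => coe_comp_succ_ι_mul n a w⟩
    simp [LamZ]

lemma betaMap_tmul (n : ℕ) (r : R) (w : ⋀[ℚ]^n A) :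
    betaMap A R n (r ⊗ₜ w) = ι ℚ (r : A) * (w : ExteriorAlgebra ℚ A) := by
  simp [betaMap]

lemma betaMap_eq (n : ℕ) (z : R ⊗[ℚ] (⋀[ℚ]^n A)) :
    betaMap A R n z = beta R (LinearMap.lTensor R (Submodule.subtype _) z) := by
  induction z with
  | zero => simp
  | tmul r w => rw [betaMap_tmul]; simp
  | add x y hx hy => simp only [map_add, hx, hy]

lemma betaMap_lTensor_comp (n : ℕ) (t : R ⊗[ℚ] ExteriorAlgebra ℚ A) :
    betaMap A R n (LinearMap.lTensor R (comp A n) t) =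
      (comp A (n + 1) (beta R t) : ExteriorAlgebra ℚ A) := by
  induction t with
  | zero => simp
  | tmul r w => rw [LinearMap.lTensor_tmul, betaMap_tmul, beta_tmul, coe_comp_succ_ι_mul]
  | add x y hx hy => simp only [map_add, hx, hy, Submodule.coe_add]

lemma lTensor_comp_subtype (n : ℕ) (z : R ⊗[ℚ] (⋀[ℚ]^n A)) :
    LinearMap.lTensor R (comp A n) (LinearMap.lTensor R (Submodule.subtype _) z) = z := by
  induction z with
  | zero => simp
  | tmul r w => simp [comp_coe]
  | add x y hx hy => simp only [map_add, hx, hy]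

lemma map_mem_exteriorPower {B : Type*} [AddCommGroup B] [Module ℚ B] (f : A →ₗ[ℚ] B) (n : ℕ)
    {x : ExteriorAlgebra ℚ A} (hx : x ∈ ⋀[ℚ]^n A) : ExteriorAlgebra.map f x ∈ ⋀[ℚ]^n B := by
  rw [← ιMulti_span_fixedDegree] at hx ⊢
  induction hx using Submodule.span_induction with
  | mem x h =>
    obtain ⟨v, rfl⟩ := h
    rw [map_apply_ιMulti]
    exact Submodule.subset_span ⟨_, rfl⟩
  | zero => simp
  | add x y _ _ hx hy => rw [map_add]; exact add_mem hx hy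
  | smul c x _ hx => rw [map_smul]; exact Submodule.smul_mem _ c hx

end Koszul

/-- Koszul-type exactness.  Let `0 → R → A → B → 0` be a short exact
sequence of ℚ-vector spaces (`R` a subspace of `A`, `B = A/R`) and `m ≥ 1` (here `m = n+1`).
Then `S²(R)⊗Λ^{m−2}(A) →α R⊗Λ^{m−1}(A) →β Λ^m(A) →γ Λ^m(B) → 0` is exact at
`R⊗Λ^{m−1}(A)`, at `Λ^m(A)` and at `Λ^m(B)`, where `α(r·s⊗w) = r⊗(s∧w) + s⊗(r∧w)`
(so that the image of `α` is the span appearing below), `β(r⊗w) = r∧w`, and `γ = Λ^m` of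
the projection `A → B`. -/
theorem koszul_exactness (A : Type*) [AddCommGroup A] [Module ℚ A]
    (R : Submodule ℚ A) (n : ℕ) :
    -- exactness at `R ⊗ Λ^{m−1}(A)`: `ker β = im α`
    (LinearMap.ker (betaMap A R n) = Submodule.span ℚ
      {z : R ⊗[ℚ] (⋀[ℚ]^n A) | ∃ (r s : R) (w : ExteriorAlgebra ℚ A),
        w ∈ LamZ A ((n : ℤ) - 1) ∧
        ∃ (x y : ⋀[ℚ]^n A),
          (x : ExteriorAlgebra ℚ A) = ExteriorAlgebra.ι ℚ (s : A) * w ∧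
          (y : ExteriorAlgebra ℚ A) = ExteriorAlgebra.ι ℚ (r : A) * w ∧
          z = r ⊗ₜ x + s ⊗ₜ y}) ∧
    -- exactness at `Λ^m(A)`: `ker γ = im β`
    (∀ x : ⋀[ℚ]^(n+1) A,
      ExteriorAlgebra.map R.mkQ (x : ExteriorAlgebra ℚ A) = 0 ↔
        (x : ExteriorAlgebra ℚ A) ∈ LinearMap.range (betaMap A R n)) ∧
    -- exactness at `Λ^m(B)`: `γ` is surjective
    (∀ y : ⋀[ℚ]^(n+1) (A ⧸ R), ∃ x : ⋀[ℚ]^(n+1) A,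
      ExteriorAlgebra.map R.mkQ (x : ExteriorAlgebra ℚ A)
        = (y : ExteriorAlgebra ℚ (A ⧸ R))) := by
  obtain ⟨p, hp'⟩ := R.subtype.exists_leftInverse_of_injective R.ker_subtype
  have hp (r : R) : p r = r := LinearMap.congr_fun hp' r
  refine ⟨le_antisymm (fun z hz => ?_) (Submodule.span_le.2 ?_), fun x => ⟨fun hx => ?_, ?_⟩,
    fun y => ?_⟩
  · have hα : LinearMap.lTensor R (⋀[ℚ]^n A).subtype z ∈ Koszul.alphaSpan R :=
      Koszul.mem_alphaSpan_of_beta_eq_zero p hp (by rw [← Koszul.betaMap_eq]; exact hz)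
    -- projecting to degree `n` sends generators of the ungraded image of `α` to generators
    -- of the graded one
    rw [← Koszul.lTensor_comp_subtype n z]
    refine (Submodule.map_span_le (LinearMap.lTensor R (Koszul.comp A n)) _ _).2 ?_
      (Submodule.mem_map_of_mem hα)
    rintro _ ⟨r, s, w, rfl⟩
    obtain ⟨v, hv, hvw⟩ := Koszul.exists_mem_LamZ n w
    refine Submodule.subset_span ⟨r, s, v, hv, _, _, hvw s, hvw r, ?_⟩
    simp
  · rintro _ ⟨r, s, w, -, x, y, hx, hy, rfl⟩
    rw [SetLike.mem_coe, LinearMap.mem_ker, map_add, Koszul.betaMap_tmul, Koszul.betaMap_tmul,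
      hx, hy, Koszul.ι_mul_swap, neg_add_cancel]
  · have h := Koszul.sub_map_sect_mem p hp (x : ExteriorAlgebra ℚ A)
    rw [hx, map_zero, sub_zero] at h
    obtain ⟨t, ht⟩ := h
    exact ⟨LinearMap.lTensor R (Koszul.comp A n) t, by
      rw [Koszul.betaMap_lTensor_comp, ht, Koszul.comp_coe]⟩
  · rintro ⟨z, hz⟩
    rw [← hz, Koszul.betaMap_eq, Koszul.map_mkQ_beta]
  · exact ⟨⟨_, Koszul.map_mem_exteriorPower (Koszul.sect p hp) (n + 1) y.2⟩,
      Koszul.map_mkQ_map_sect p hp y⟩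

end
end
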